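/- Let α be a type and A, B lists over α. Let i ≥ 2 and m ≥ 1 be integers and set k = 2^i·m − 2^{i−1} + 1 (an odd integer). Then S_{A,B}(k) = S(m)^i ⊕ S(a(m)) if m ≥ 2, and S_{A,B}(k) = S(0)^i ⊕ S(1) if m = 1, where S(m)^i denotes the concatenation of i copies of S(m). -/

import Mathlib

/-- Stern's diatomic sequence. -/
def stern : ℕ → ℕ
  | 0 => 0
  | 1 => 1
  | n + 2 =>
    if (n + 2) % 2 = 0 then stern ((n + 2) / 2)
    else stern ((n + 2) / 2) + stern ((n + 2) / 2 + 1)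
decreasing_by all_goals omega

/-- OEIS A003602: a(1)=1, a(2n)=a(n), a(2n+1)=n+1. (a(0)=0 as junk value.) -/
def aseq : ℕ → ℕ
  | 0 => 0
  | 1 => 1
  | n + 2 =>
    if (n + 2) % 2 = 0 then aseq ((n + 2) / 2)
    else (n + 2) / 2 + 1
decreasing_by all_goals omega

-- the modified sequence `a*`: zero at powers of two.
open Classical in
noncomputable def aStar (j : ℕ) : ℕ :=
  if ∃ k, j = 2 ^ k then 0 else aseq j

theorem aseq_le (n : ℕ) : aseq n ≤ n := by
  induction n using Nat.strong_induction_on with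
  | _ n ih =>
    match n with
    | 0 => simp [aseq]
    | 1 => simp [aseq]
    | m + 2 =>
      rw [aseq]
      split
      · exact le_trans (ih ((m + 2) / 2) (by omega)) (by omega)
      · omega

theorem aStar_le (j : ℕ) : aStar j ≤ j := by
  unfold aStar
  split
  · omega
  · exact aseq_le j

/-- The Markov-type sequence `S_{A,B}(n)`. -/
noncomputable def mseq {α : Type*} (A B : List α) : ℕ → List α
  | 0 => A
  | 1 => B
  | 2 => A ++ B
  | n + 3 =>
    if (n + 3) % 2 = 0 then
      mseq A B ((n + 3) / 2) ++ mseq A B (aseq ((n + 3) / 2))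
    else
      mseq A B (aStar ((n + 4) / 2 - 1)) ++ mseq A B ((n + 4) / 2)
decreasing_by
  all_goals first
    | omega
    | exact lt_of_le_of_lt (aseq_le _) (by omega)
    | exact lt_of_le_of_lt (aStar_le _) (by omega)

/-!
Both `a` and `a*` are invariant under doubling, so for `j ≥ 1` each application of the odd
recurrence to `S (2 ^ r * j + 1)` halves `2 ^ r * j` and splits off the same factor `S (a* j)`,
down to `S (j + 1)`. For `j = 2 * m - 1` this last term is `S (2 * m) = S (a* j) ++ S (a m)`, which
supplies one more copy of that factor; moreover `a* (2 * m - 1)` is `m` if `m ≥ 2` and `0` if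
`m = 1`.
-/

theorem aseq_two_mul (n : ℕ) : aseq (2 * n) = aseq n := by
  rcases n with _ | n
  · rfl
  · rw [show 2 * (n + 1) = 2 * n + 2 by ring, aseq, if_pos (by omega),
      show (2 * n + 2) / 2 = n + 1 by omega]

theorem aseq_two_mul_add_one (n : ℕ) : aseq (2 * n + 1) = n + 1 := by
  rcases n with _ | n
  · simp [aseq]
  · rw [show 2 * (n + 1) + 1 = 2 * n + 1 + 2 by ring, aseq, if_neg (by omega)]
    omega

theorem exists_two_mul_eq_two_pow_iff (n : ℕ) : (∃ k, 2 * n = 2 ^ k) ↔ ∃ k, n = 2 ^ k := by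
  constructor
  · rintro ⟨_ | k, hk⟩
    · omega
    · exact ⟨k, by rw [pow_succ'] at hk; omega⟩
  · rintro ⟨k, rfl⟩
    exact ⟨k + 1, (pow_succ' 2 k).symm⟩

theorem aStar_two_mul (n : ℕ) : aStar (2 * n) = aStar n := by
  rw [aStar, aStar, aseq_two_mul]
  classical exact if_congr (exists_two_mul_eq_two_pow_iff n) rfl rfl

theorem aStar_two_pow_mul (r n : ℕ) : aStar (2 ^ r * n) = aStar n := by
  induction r with
  | zero => rw [pow_zero, one_mul]
  | succ r ih => rw [pow_succ', mul_assoc, aStar_two_mul, ih]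

theorem aStar_one : aStar 1 = 0 :=
  if_pos ⟨0, rfl⟩

theorem aStar_two_mul_add_one {n : ℕ} (hn : n ≠ 0) : aStar (2 * n + 1) = n + 1 := by
  have not_two_pow : ¬∃ k, 2 * n + 1 = 2 ^ k := by
    rintro ⟨_ | k, hk⟩
    · omega
    · rw [pow_succ'] at hk
      omega
  rw [aStar, if_neg not_two_pow, aseq_two_mul_add_one]

theorem two_pow_succ_mul_succ_sub_two_pow (r n : ℕ) :
    2 ^ (r + 1) * (n + 1) - 2 ^ r = 2 ^ r * (2 * n + 1) :=
  Nat.sub_eq_of_eq_add (by ring)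

section mseq

variable {α : Type*} (A B : List α)

theorem mseq_two_mul {n : ℕ} (hn : 2 ≤ n) :
    mseq A B (2 * n) = mseq A B n ++ mseq A B (aseq n) := by
  obtain ⟨p, rfl⟩ := Nat.exists_eq_add_of_le' hn
  rw [show 2 * (p + 2) = 2 * p + 1 + 3 by ring, mseq, if_pos (by omega),
    show (2 * p + 1 + 3) / 2 = p + 2 by omega]

theorem mseq_two_mul_add_one {n : ℕ} (hn : n ≠ 0) :
    mseq A B (2 * n + 1) = mseq A B (aStar n) ++ mseq A B (n + 1) := by
  obtain ⟨p, rfl⟩ := Nat.exists_eq_add_one_of_ne_zero hn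
  rw [show 2 * (p + 1) + 1 = 2 * p + 3 by ring, mseq, if_neg (by omega),
    show (2 * p + 4) / 2 = p + 2 by omega, show p + 2 - 1 = p + 1 by omega]

theorem mseq_two_mul_succ (n : ℕ) :
    mseq A B (2 * (n + 1)) = mseq A B (aStar (2 * n + 1)) ++ mseq A B (aseq (n + 1)) := by
  rcases eq_or_ne n 0 with rfl | hn
  · simp [aStar_one, aseq, mseq]
  · rw [aStar_two_mul_add_one hn, mseq_two_mul A B (by omega)]

theorem mseq_two_pow_mul_add_one (r : ℕ) {j : ℕ} (hj : j ≠ 0) :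
    mseq A B (2 ^ r * j + 1) =
      (List.replicate r (mseq A B (aStar j))).flatten ++ mseq A B (j + 1) := by
  induction r with
  | zero => simp
  | succ r ih =>
    calc mseq A B (2 ^ (r + 1) * j + 1)
      _ = mseq A B (2 * (2 ^ r * j) + 1) := by rw [pow_succ', mul_assoc]
      _ = mseq A B (aStar j) ++ mseq A B (2 ^ r * j + 1) := by
        rw [mseq_two_mul_add_one A B (by positivity), aStar_two_pow_mul]
      _ = (List.replicate (r + 1) (mseq A B (aStar j))).flatten ++ mseq A B (j + 1) := by
        rw [ih, List.replicate_succ, List.flatten_cons, List.append_assoc]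

theorem mseq_two_pow_mul_odd_add_one (r n : ℕ) :
    mseq A B (2 ^ r * (2 * n + 1) + 1) =
      (List.replicate (r + 1) (mseq A B (aStar (2 * n + 1)))).flatten ++
        mseq A B (aseq (n + 1)) := by
  rw [mseq_two_pow_mul_add_one A B r (by omega), show 2 * n + 1 + 1 = 2 * (n + 1) by ring,
    mseq_two_mul_succ, List.replicate_succ', List.flatten_concat, List.append_assoc]

end mseq

/-- for `i ≥ 2`, `m ≥ 1` and `k = 2^i·m − 2^{i−1} + 1`,
`S_{A,B}(k) = S(m)^i ⊕ S(a(m))` if `m ≥ 2`, and `S_{A,B}(k) = S(0)^i ⊕ S(1)` if `m = 1`. -/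
theorem stmt12 {α : Type*} (A B : List α) (i m : ℕ) (hi : 2 ≤ i) (hm : 1 ≤ m) :
    (2 ≤ m →
      mseq A B (2 ^ i * m - 2 ^ (i - 1) + 1) =
        (List.replicate i (mseq A B m)).flatten ++ mseq A B (aseq m)) ∧
    (m = 1 →
      mseq A B (2 ^ i * m - 2 ^ (i - 1) + 1) =
        (List.replicate i (mseq A B 0)).flatten ++ mseq A B 1) := by
  obtain ⟨r, rfl⟩ := Nat.exists_eq_add_of_le' (one_le_two.trans hi)
  obtain ⟨n, rfl⟩ := Nat.exists_eq_add_of_le' hm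
  rw [Nat.add_sub_cancel, two_pow_succ_mul_succ_sub_two_pow, mseq_two_pow_mul_odd_add_one]
  constructor
  · intro two_le
    rw [aStar_two_mul_add_one (by omega)]
  · intro eq_one
    obtain rfl : n = 0 := by omega
    rw [mul_zero, zero_add, aStar_one, aseq]
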